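/- Assume ω > 0. Let b, b' ∈ {0} ∪ c^{∖k} with b < b' and such that no element of {0} ∪ c^{∖k} lies strictly between b and b'. If ω b + S(b + ε_c) < |γ| < ω b' + S(b' − ε_c), then z* = (sign(γ)/ω)·(|γ| − S(b + ε_c)) satisfies b < |z*| < b' and z* is a minimizer over ℝ of the function G. -/

import Mathlib

open Finset Filter

noncomputable section

/-- The sign of a real number, with the convention `sgn 0 = 1`. -/
def sgn (t : ℝ) : ℝ := if t < 0 then -1 else 1

/-- A permutation sorting the absolute values of `β` in nonincreasing order. -/
def sortPerm {p : ℕ} (β : Fin p → ℝ) : Equiv.Perm (Fin p) :=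
  (Fin.revPerm).trans (Tuple.sort fun j => |β j|)

/-- The sorted ℓ₁ norm `J(β) = Σ_j λ_j |β|_(j)`. -/
def sortedL1 {p : ℕ} (lam β : Fin p → ℝ) : ℝ :=
  ∑ j, lam j * |β (sortPerm β j)|

/-- `β(z)`: the vector obtained from `β` by replacing entries of the cluster
`{i : |β i| = ck}` by `sign(β i) * z`. -/
def cupd {p : ℕ} (β : Fin p → ℝ) (ck z : ℝ) : Fin p → ℝ :=
  fun i => if |β i| = ck then sgn (β i) * z else β i

/-- The partial sorted ℓ₁ norm `H(z) = J(β(z))`. -/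
def Hfun {p : ℕ} (lam β : Fin p → ℝ) (ck : ℝ) (z : ℝ) : ℝ :=
  sortedL1 lam (cupd β ck z)

/-- `S(w) = Σ_{j ∈ C(w)} λ_{(j)⁻_w}`, where `C(w) = {j : |β(w)_j| = |w|}`. -/
def Sval {p : ℕ} (lam β : Fin p → ℝ) (ck : ℝ) (w : ℝ) : ℝ :=
  ∑ j, if |cupd β ck w j| = |w| then lam ((sortPerm (cupd β ck w))⁻¹ j) else 0

/-- squared Euclidean norm -/
def sqnorm {n : ℕ} (v : Fin n → ℝ) : ℝ := ∑ i, (v i) ^ 2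

/-- `G(z) = (1/2)‖y − Xβ(z)‖² + H(z)`. -/
def Gfun {n p : ℕ} (lam : Fin p → ℝ) (X : Matrix (Fin n) (Fin p) ℝ) (y : Fin n → ℝ)
    (β : Fin p → ℝ) (ck : ℝ) (z : ℝ) : ℝ :=
  (1/2) * sqnorm (fun i => y i - ∑ j, X i j * cupd β ck z j) + Hfun lam β ck z

/-- `x̃ = Σ_{j ∈ C_k} sign(β_j) X_{:j}`. -/
def xtil {n p : ℕ} (X : Matrix (Fin n) (Fin p) ℝ) (β : Fin p → ℝ) (ck : ℝ) : Fin n → ℝ :=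
  fun i => ∑ j, if |β j| = ck then sgn (β j) * X i j else 0

/-- `γ = c_k ω + x̃ᵀ r` where `r = y − Xβ` and `ω = ‖x̃‖²`. -/
def gam {n p : ℕ} (X : Matrix (Fin n) (Fin p) ℝ) (y : Fin n → ℝ) (β : Fin p → ℝ) (ck : ℝ) : ℝ :=
  ck * sqnorm (xtil X β ck) + ∑ i, xtil X β ck i * (y i - ∑ j, X i j * β j)

end

theorem abs_sgn (t : ℝ) : |sgn t| = 1 := by
  unfold sgn; split_ifs <;> simp

theorem sgn_mul_abs (t : ℝ) : sgn t * |t| = t := by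
  unfold sgn
  split_ifs with h
  · rw [abs_of_neg h]; ring
  · rw [abs_of_nonneg (not_lt.mp h)]; ring

theorem mul_sgn_self (t : ℝ) : t * sgn t = |t| := by
  unfold sgn
  split_ifs with h
  · rw [abs_of_neg h]; ring
  · rw [abs_of_nonneg (not_lt.mp h)]; ring

theorem antitone_abs_sortPerm {p : ℕ} (v : Fin p → ℝ) : Antitone fun j => |v (sortPerm v j)| := by
  intro i j hij
  exact Tuple.monotone_sort (fun j => |v j|) (Fin.rev_le_rev.mpr hij)

/-- Rearrangement inequality: a sorting permutation maximizes the weighted sum. -/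
theorem sum_mul_abs_perm_le {p : ℕ} {lam : Fin p → ℝ} (hlam : Antitone lam) {v : Fin p → ℝ}
    {σ : Equiv.Perm (Fin p)} (hσ : Antitone fun j => |v (σ j)|) (τ : Equiv.Perm (Fin p)) :
    ∑ j, lam j * |v (τ j)| ≤ ∑ j, lam j * |v (σ j)| := by
  have h := (hlam.monovary hσ).sum_mul_comp_perm_le_sum_mul (σ := τ.trans σ.symm)
  simpa using h

theorem sum_mul_abs_perm_le_sortedL1 {p : ℕ} {lam : Fin p → ℝ} (hlam : Antitone lam)
    (v : Fin p → ℝ) (τ : Equiv.Perm (Fin p)) :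
    ∑ j, lam j * |v (τ j)| ≤ sortedL1 lam v :=
  sum_mul_abs_perm_le hlam (antitone_abs_sortPerm v) τ

theorem sortedL1_eq_of_antitone {p : ℕ} {lam : Fin p → ℝ} (hlam : Antitone lam) {v : Fin p → ℝ}
    {σ : Equiv.Perm (Fin p)} (hσ : Antitone fun j => |v (σ j)|) :
    sortedL1 lam v = ∑ j, lam j * |v (σ j)| :=
  le_antisymm (sum_mul_abs_perm_le hlam hσ _) (sum_mul_abs_perm_le_sortedL1 hlam v σ)

theorem abs_cupd {p : ℕ} (β : Fin p → ℝ) (ck z : ℝ) (j : Fin p) :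
    |cupd β ck z j| = if |β j| = ck then |z| else |β j| := by
  unfold cupd
  split_ifs <;> simp [abs_mul, abs_sgn]

/-- On an interval `(b, b')` free of the other clusters, `H` is affine in `|z|` with slope `S(u)`,
and this affine function of `|z|` bounds `H` from below everywhere. -/
theorem exists_affine_minorant_Hfun {p : ℕ} {lam : Fin p → ℝ} (hlam : Antitone lam)
    (β : Fin p → ℝ) (ck : ℝ) {b b' : ℝ}
    (hgap : ∀ j, |β j| ≠ ck → |β j| ≤ b ∨ b' ≤ |β j|)
    {u : ℝ} (hu : b < |u|) (hu' : |u| < b') :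
    ∃ K : ℝ, (∀ w, Sval lam β ck u * |w| + K ≤ Hfun lam β ck w) ∧
      ∀ w, b < |w| → |w| < b' → Hfun lam β ck w = Sval lam β ck u * |w| + K := by
  set σ := sortPerm (cupd β ck u) with hσ
  have hS : Sval lam β ck u = ∑ j, if |β j| = ck then lam (σ⁻¹ j) else 0 := by
    unfold Sval
    refine Finset.sum_congr rfl fun j _ => ?_
    rw [abs_cupd]
    by_cases h : |β j| = ck
    · simp [h, hσ]
    · have : |β j| ≠ |u| := by
        rcases hgap j h with h' | h'
        · exact (h'.trans_lt hu).ne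
        · exact (hu'.trans_le h').ne'
      simp [h, this]
  have hsum : ∀ w, ∑ j, lam j * |cupd β ck w (σ j)| =
      Sval lam β ck u * |w| + ∑ j, if |β j| = ck then 0 else lam (σ⁻¹ j) * |β j| := by
    intro w
    rw [hS, Finset.sum_mul, ← Finset.sum_add_distrib,
      ← Equiv.sum_comp σ⁻¹ fun j => lam j * |cupd β ck w (σ j)|]
    refine Finset.sum_congr rfl fun j _ => ?_
    rw [abs_cupd]
    split_ifs <;> simp_all
  refine ⟨_, fun w => (hsum w).symm.trans_le (sum_mul_abs_perm_le_sortedL1 hlam _ σ),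
    fun w hw hw' => (sortedL1_eq_of_antitone hlam ?_).trans (hsum w)⟩
  intro i j hij
  have h := antitone_abs_sortPerm (cupd β ck u) hij
  simp only [← hσ, abs_cupd] at h ⊢
  have hi := hgap (σ i)
  have hj := hgap (σ j)
  split_ifs at h ⊢ with h1 h2 h2
  · exact le_rfl
  · rcases hi h2 with h' | h' <;> linarith
  · rcases hj h1 with h' | h' <;> linarith
  · exact h

theorem Sval_eq_of_mem_gap {p : ℕ} {lam : Fin p → ℝ} (hlam : Antitone lam)
    (β : Fin p → ℝ) (ck : ℝ) {b b' : ℝ} (hb : 0 ≤ b) (hbb' : b < b')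
    (hgap : ∀ j, |β j| ≠ ck → |β j| ≤ b ∨ b' ≤ |β j|)
    {u v : ℝ} (hu : b < |u|) (hu' : |u| < b') (hv : b < |v|) (hv' : |v| < b') :
    Sval lam β ck u = Sval lam β ck v := by
  obtain ⟨K, -, hK⟩ := exists_affine_minorant_Hfun hlam β ck hgap hu hu'
  obtain ⟨L, -, hL⟩ := exists_affine_minorant_Hfun hlam β ck hgap hv hv'
  obtain ⟨s, hs, hs'⟩ := exists_between hbb'
  obtain ⟨t, ht, ht'⟩ := exists_between hs'
  have habs : |s| = s := abs_of_pos (hb.trans_lt hs)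
  have habt : |t| = t := abs_of_pos (hb.trans_lt (hs.trans ht))
  have e1 := (hK s (by rwa [habs]) (by rwa [habs])).symm.trans
    (hL s (by rwa [habs]) (by rwa [habs]))
  have e2 := (hK t (by rw [habt]; linarith) (by rwa [habt])).symm.trans
    (hL t (by rw [habt]; linarith) (by rwa [habt]))
  rw [habs] at e1
  rw [habt] at e2
  have : (Sval lam β ck u - Sval lam β ck v) * (t - s) = 0 := by linarith
  rcases mul_eq_zero.mp this with h | h <;> linarith

theorem cupd_eq_add {p : ℕ} (β : Fin p → ℝ) (ck z : ℝ) (j : Fin p) :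
    cupd β ck z j = β j + (z - ck) * if |β j| = ck then sgn (β j) else 0 := by
  unfold cupd
  split_ifs with h
  · have := sgn_mul_abs (β j)
    rw [h] at this
    linarith
  · simp

/-- The least-squares part of `G` is a quadratic with leading coefficient `ω / 2` and linear
coefficient `-γ`. -/
theorem exists_Gfun_eq {n p : ℕ} (lam : Fin p → ℝ) (X : Matrix (Fin n) (Fin p) ℝ)
    (y : Fin n → ℝ) (β : Fin p → ℝ) (ck : ℝ) :
    ∃ A : ℝ, ∀ z, Gfun lam X y β ck z =
      sqnorm (xtil X β ck) / 2 * z ^ 2 - gam X y β ck * z + A + Hfun lam β ck z := by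
  set r : Fin n → ℝ := fun i => y i - ∑ j, X i j * β j with hr
  have hres : ∀ z i, y i - ∑ j, X i j * cupd β ck z j = r i - (z - ck) * xtil X β ck i := by
    intro z i
    simp only [hr, xtil, cupd_eq_add, mul_add, Finset.sum_add_distrib, Finset.mul_sum]
    rw [sub_sub]
    congr 2
    refine Finset.sum_congr rfl fun j _ => ?_
    split_ifs <;> ring
  have hsq : ∀ z, sqnorm (fun i => r i - (z - ck) * xtil X β ck i) =
      sqnorm r - 2 * (z - ck) * ∑ i, xtil X β ck i * r i
        + (z - ck) ^ 2 * sqnorm (xtil X β ck) := by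
    intro z
    simp only [sqnorm, Finset.mul_sum, ← Finset.sum_sub_distrib, ← Finset.sum_add_distrib]
    exact Finset.sum_congr rfl fun i _ => by ring
  have hγ : gam X y β ck = ck * sqnorm (xtil X β ck) + ∑ i, xtil X β ck i * r i := rfl
  refine ⟨sqnorm r / 2 + ck * ∑ i, xtil X β ck i * r i + ck ^ 2 * sqnorm (xtil X β ck) / 2,
    fun z => ?_⟩
  unfold Gfun
  simp only [hres]
  rw [hsq, hγ]
  ring

theorem abs_soft_threshold {ω γ S : ℝ} (hω : 0 < ω) (hS : S ≤ |γ|) :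
    |sgn γ / ω * (|γ| - S)| = (|γ| - S) / ω := by
  rw [abs_mul, abs_div, abs_sgn, abs_of_pos hω, abs_of_nonneg (sub_nonneg.mpr hS)]
  ring

/-- Soft thresholding minimizes `ω w² / 2 - γ w + S |w|`. -/
theorem soft_threshold_le {ω γ S : ℝ} (hω : 0 < ω) (hS : S ≤ |γ|) (w : ℝ) :
    ω / 2 * (sgn γ / ω * (|γ| - S)) ^ 2 - γ * (sgn γ / ω * (|γ| - S))
        + S * |sgn γ / ω * (|γ| - S)|
      ≤ ω / 2 * w ^ 2 - γ * w + S * |w| := by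
  have habs : |sgn γ / ω * (|γ| - S)| = (|γ| - S) / ω := abs_soft_threshold hω hS
  have hlin : γ * (sgn γ / ω * (|γ| - S)) = |γ| * ((|γ| - S) / ω) := by
    rw [← mul_sgn_self γ]; ring
  rw [← sq_abs, habs, hlin, ← sq_abs w]
  set t := (|γ| - S) / ω with ht
  have htω : ω * t = |γ| - S := by rw [ht]; field_simp
  have hw : γ * w ≤ |γ| * |w| := (le_abs_self _).trans (abs_mul γ w).le
  have htw : ω * t * |w| = (|γ| - S) * |w| := by rw [htω]
  have htt : ω * t * t = (|γ| - S) * t := by rw [htω]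
  linarith [mul_nonneg hω.le (sq_nonneg (|w| - t))]

/-- interior case of the SLOPE thresholding operator. If `b < b'` are
consecutive elements of `{0} ∪ c^{∖k}` and `ω b + S(b + ε) < |γ| < ω b' + S(b' − ε)`,
then `z* = (sign γ / ω)(|γ| − S(b + ε))` satisfies `b < |z*| < b'` and minimizes `G`. -/
theorem interior_case_minimizes_G
    {n p m : ℕ} (hn : 0 < n) (hp : 0 < p) (hm : 0 < m)
    (lam : Fin p → ℝ)
    (hlam_mono : ∀ i j : Fin p, i ≤ j → lam j ≤ lam i)
    (hlam_nonneg : ∀ j, 0 ≤ lam j)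
    (β : Fin p → ℝ) (c : Fin m → ℝ)
    (hc_anti : StrictAnti c) (hc_nonneg : ∀ i, 0 ≤ c i)
    (h_attain : ∀ i, ∃ j, |β j| = c i)
    (h_cover : ∀ j, ∃ i, |β j| = c i)
    (k : Fin m)
    (ε : ℝ) (hε_pos : 0 < ε)
    (hε_sep : ∀ i j, i ≠ j → ε < |c i - c j|)
    (hε_min : ∀ i, c i ≠ 0 → ε < c i)
    (X : Matrix (Fin n) (Fin p) ℝ) (y : Fin n → ℝ)
    (hω : 0 < sqnorm (xtil X β (c k)))
    (b b' : ℝ)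
    (hb : b = 0 ∨ ∃ i, i ≠ k ∧ b = c i)
    (hb' : b' = 0 ∨ ∃ i, i ≠ k ∧ b' = c i)
    (hbb' : b < b')
    (h_consec : ∀ x : ℝ, (x = 0 ∨ ∃ i, i ≠ k ∧ x = c i) → ¬ (b < x ∧ x < b'))
    (hγ_lo : sqnorm (xtil X β (c k)) * b + Sval lam β (c k) (b + ε) < |gam X y β (c k)|)
    (hγ_hi : |gam X y β (c k)| < sqnorm (xtil X β (c k)) * b' + Sval lam β (c k) (b' - ε)) :
    b < |sgn (gam X y β (c k)) / sqnorm (xtil X β (c k)) *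
          (|gam X y β (c k)| - Sval lam β (c k) (b + ε))| ∧
    |sgn (gam X y β (c k)) / sqnorm (xtil X β (c k)) *
          (|gam X y β (c k)| - Sval lam β (c k) (b + ε))| < b' ∧
    ∀ w : ℝ,
      Gfun lam X y β (c k)
          (sgn (gam X y β (c k)) / sqnorm (xtil X β (c k)) *
            (|gam X y β (c k)| - Sval lam β (c k) (b + ε)))
        ≤ Gfun lam X y β (c k) w := by
  have hlam : Antitone lam := fun i j hij => hlam_mono i j hij
  have hb0 : 0 ≤ b := by
    rcases hb with rfl | ⟨i, -, rfl⟩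
    · exact le_rfl
    · exact hc_nonneg i
  obtain ⟨i', hi'k, hi'⟩ : ∃ i, i ≠ k ∧ b' = c i := by
    rcases hb' with h | h
    · linarith
    · exact h
  have hεb : ε < b' - b := by
    rcases hb with rfl | ⟨i, -, rfl⟩
    · have := hε_min i' (by linarith)
      linarith
    · have := hε_sep i' i (by rintro rfl; linarith)
      rwa [abs_of_pos (by linarith), ← hi'] at this
  have hgap : ∀ j, |β j| ≠ c k → |β j| ≤ b ∨ b' ≤ |β j| := by
    intro j hj
    obtain ⟨i, hi⟩ := h_cover j
    have := h_consec |β j| (Or.inr ⟨i, by rintro rfl; exact hj hi, hi⟩)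
    by_contra! h
    exact this h
  have hlo : |b + ε| = b + ε := abs_of_pos (by linarith)
  have hhi : |b' - ε| = b' - ε := abs_of_pos (by linarith)
  have hSS : Sval lam β (c k) (b + ε) = Sval lam β (c k) (b' - ε) :=
    Sval_eq_of_mem_gap hlam β (c k) hb0 hbb' hgap (by rw [hlo]; linarith) (by rw [hlo]; linarith)
      (by rw [hhi]; linarith) (by rw [hhi]; linarith)
  obtain ⟨K, hK, hKeq⟩ := exists_affine_minorant_Hfun hlam β (c k) hgap
    (u := b + ε) (by rw [hlo]; linarith) (by rw [hlo]; linarith)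
  obtain ⟨A, hA⟩ := exists_Gfun_eq lam X y β (c k)
  rw [← hSS] at hγ_hi
  simp only [hA]
  set ω := sqnorm (xtil X β (c k))
  set γ := gam X y β (c k)
  set S := Sval lam β (c k) (b + ε)
  have hωb : 0 ≤ ω * b := mul_nonneg hω.le hb0
  have hSγ : S ≤ |γ| := by linarith
  have habs : |sgn γ / ω * (|γ| - S)| = (|γ| - S) / ω := abs_soft_threshold hω hSγ
  have hz : b < |sgn γ / ω * (|γ| - S)| := by
    rw [habs, lt_div_iff₀ hω]; linarith
  have hz' : |sgn γ / ω * (|γ| - S)| < b' := by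
    rw [habs, div_lt_iff₀ hω]; linarith
  refine ⟨hz, hz', fun w => ?_⟩
  rw [hKeq _ hz hz']
  linarith [hK w, soft_threshold_le hω hSγ w]
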